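/- Let A : ℝ³ → ℝ³ be a smooth vector potential with nonvanishing magnetic field B = ∇×A on an open set, b = B/‖B‖, and let χ be a smooth local diffeomorphism satisfying ∂₃χ(q̂) = b(χ(q̂)) and dα_{χ(q̂)}(Dχ(q̂)u, Dχ(q̂)v) = u₁v₂ − u₂v₁ for all u,v ∈ ℝ³. Define, at q = χ(q̂), the tangent frame f_j = (Dχ(q̂)e_j, DA(q)Dχ(q̂)e_j) for j = 1,2,3, where (e₁,e₂,e₃) is the canonical basis of ℝ³. Then ω₀(f₁, f₂) = 1 and ω₀(f₁, f₃) = ω₀(f₂, f₃) = 0. -/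

import Mathlib

open Matrix

noncomputable section

/-- The curl `∇ × A` of a vector field on `ℝ³`. -/
def curl (A : (Fin 3 → ℝ) → (Fin 3 → ℝ)) (q : Fin 3 → ℝ) : Fin 3 → ℝ :=
  ![fderiv ℝ (fun x => A x 2) q (Pi.single 1 1) - fderiv ℝ (fun x => A x 1) q (Pi.single 2 1),
    fderiv ℝ (fun x => A x 0) q (Pi.single 2 1) - fderiv ℝ (fun x => A x 2) q (Pi.single 0 1),
    fderiv ℝ (fun x => A x 1) q (Pi.single 0 1) - fderiv ℝ (fun x => A x 0) q (Pi.single 1 1)]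

/-- The Euclidean norm on `ℝ³` (as `Fin 3 → ℝ`). -/
def norm3 (v : Fin 3 → ℝ) : ℝ := Real.sqrt (v ⬝ᵥ v)

/-- The canonical symplectic form on `ℝ⁶ = ℝ³ × ℝ³`:
`ω₀((u₁,u₂),(v₁,v₂)) = ⟨v₁,u₂⟩ − ⟨v₂,u₁⟩`. -/
def omega0 (u v : (Fin 3 → ℝ) × (Fin 3 → ℝ)) : ℝ :=
  v.1 ⬝ᵥ u.2 - v.2 ⬝ᵥ u.1

/-- The adjoint (transpose with respect to the Euclidean dot product) of a continuous
linear map `ℝ³ → ℝ³`. -/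
def adjoint3 (L : (Fin 3 → ℝ) →L[ℝ] (Fin 3 → ℝ)) (w : Fin 3 → ℝ) : Fin 3 → ℝ :=
  fun i => (L (Pi.single i 1)) ⬝ᵥ w

/-- The tangent frame `f_j = (Dχ(q̂)e_j, DA(χ(q̂))Dχ(q̂)e_j)` of the characteristic
manifold `Σ` in the straightened coordinates. -/
def tangentFrame (A χ : (Fin 3 → ℝ) → (Fin 3 → ℝ)) (qh : Fin 3 → ℝ) (j : Fin 3) :
    (Fin 3 → ℝ) × (Fin 3 → ℝ) :=
  (fderiv ℝ χ qh (Pi.single j 1), fderiv ℝ A (χ qh) (fderiv ℝ χ qh (Pi.single j 1)))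

/-!
The `2`-form with vector `B = curl A` is the exterior derivative of the `1`-form with vector `A`:
since `B × w = (DA - DAᵀ) w`, the form `⟨u, v × B⟩` equals `⟨v, DA u⟩ - ⟨DA v, u⟩`, which is the
restriction of `ω₀` to the graph of `DA`. The frame vectors `f_j` are the lifts of `Dχ e_j` to this
graph, so the symplectic normalization of `χ` gives `ω₀(f_j, f_k) = (dq̂₁ ∧ dq̂₂)(e_j, e_k)`.
-/

theorem map_eq_sum_smul_map_single {ι R M F : Type*} [Fintype ι] [DecidableEq ι] [Semiring R]
    [AddCommMonoid M] [Module R M] [FunLike F (ι → R) M] [LinearMapClass F R (ι → R) M]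
    (f : F) (u : ι → R) : f u = ∑ i, u i • f (Pi.single i 1) := by
  conv_lhs => rw [pi_eq_sum_univ' u]
  simp only [map_sum, map_smul]

/-- The axial vector of the skew-symmetric endomorphism `L - Lᵀ` of `ℝ³`, that is, the vector `a`
with `a × w = (L - Lᵀ) w`. The entry of `L` in row `i` and column `j` is `L (Pi.single j 1) i`. -/
def axialVector (L : (Fin 3 → ℝ) →L[ℝ] (Fin 3 → ℝ)) : Fin 3 → ℝ :=
  ![L (Pi.single 1 1) 2 - L (Pi.single 2 1) 1,
    L (Pi.single 2 1) 0 - L (Pi.single 0 1) 2,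
    L (Pi.single 0 1) 1 - L (Pi.single 1 1) 0]

section LinearAlgebra

variable (L : (Fin 3 → ℝ) →L[ℝ] (Fin 3 → ℝ)) (u v w : Fin 3 → ℝ)

theorem dotProduct_adjoint3 : u ⬝ᵥ adjoint3 L w = L u ⬝ᵥ w :=
  calc
    u ⬝ᵥ adjoint3 L w = ∑ i, (u i • L (Pi.single i 1)) ⬝ᵥ w := by
      simp only [dotProduct, adjoint3, Pi.smul_apply, smul_eq_mul, Finset.mul_sum, mul_assoc]
    _ = L u ⬝ᵥ w := by rw [← sum_dotProduct, ← map_eq_sum_smul_map_single]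

theorem axialVector_crossProduct : axialVector L ⨯₃ w = L w - adjoint3 L w := by
  have image_apply (i : Fin 3) : L w i =
      w 0 * L (Pi.single 0 1) i + w 1 * L (Pi.single 1 1) i + w 2 * L (Pi.single 2 1) i := by
    rw [map_eq_sum_smul_map_single L w, Fin.sum_univ_three]
    rfl
  ext i
  simp only [Pi.sub_apply, image_apply, adjoint3, vec3_dotProduct, cross_apply, axialVector]
  fin_cases i <;> dsimp <;> ring

theorem omega0_graph : omega0 (u, L u) (v, L v) = u ⬝ᵥ v ⨯₃ axialVector L :=
  calc
    omega0 (u, L u) (v, L v) = v ⬝ᵥ (L u - adjoint3 L u) := by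
      rw [omega0, dotProduct_sub, dotProduct_adjoint3]
    _ = v ⬝ᵥ axialVector L ⨯₃ u := by rw [axialVector_crossProduct]
    _ = u ⬝ᵥ v ⨯₃ axialVector L := (triple_product_permutation u v _).symm

end LinearAlgebra

section MagneticForm

variable {A : (Fin 3 → ℝ) → (Fin 3 → ℝ)}

theorem curl_eq_axialVector_fderiv {q : Fin 3 → ℝ} (hA : DifferentiableAt ℝ A q) :
    curl A q = axialVector (fderiv ℝ A q) := by
  have fderiv_component (i : Fin 3) (w : Fin 3 → ℝ) :
      fderiv ℝ (fun x => A x i) q w = fderiv ℝ A q w i :=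
    DFunLike.congr_fun (fderiv_apply hA i) w
  simp only [curl, axialVector, fderiv_component]

theorem omega0_tangentFrame {χ : (Fin 3 → ℝ) → (Fin 3 → ℝ)} {qh : Fin 3 → ℝ}
    (hA : DifferentiableAt ℝ A (χ qh)) (j k : Fin 3) :
    omega0 (tangentFrame A χ qh j) (tangentFrame A χ qh k) =
      fderiv ℝ χ qh (Pi.single j 1) ⬝ᵥ fderiv ℝ χ qh (Pi.single k 1) ⨯₃ curl A (χ qh) := by
  rw [curl_eq_axialVector_fderiv hA]
  exact omega0_graph _ _ _

theorem statement7_general {χ : (Fin 3 → ℝ) → (Fin 3 → ℝ)} {qh : Fin 3 → ℝ}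
    (hA : DifferentiableAt ℝ A (χ qh))
    (hsymp : ∀ u v : Fin 3 → ℝ,
      fderiv ℝ χ qh u ⬝ᵥ fderiv ℝ χ qh v ⨯₃ curl A (χ qh) = u 0 * v 1 - u 1 * v 0) :
    omega0 (tangentFrame A χ qh 0) (tangentFrame A χ qh 1) = 1 ∧
      omega0 (tangentFrame A χ qh 0) (tangentFrame A χ qh 2) = 0 ∧
      omega0 (tangentFrame A χ qh 1) (tangentFrame A χ qh 2) = 0 := by
  simp only [omega0_tangentFrame hA, hsymp]
  simp

end MagneticForm

/-- In straightened coordinates (`∂₃χ = (B/‖B‖)∘χ`, `χ*(dα) = dq̂₁∧dq̂₂`), the tangent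
frame `f_j = (Dχ e_j, DA Dχ e_j)` of `Σ` satisfies `ω₀(f₁,f₂) = 1` and
`ω₀(f₁,f₃) = ω₀(f₂,f₃) = 0`. -/
theorem statement7 (A : (Fin 3 → ℝ) → (Fin 3 → ℝ)) (hA : ContDiff ℝ (⊤ : ℕ∞) A)
    (Ω : Set (Fin 3 → ℝ)) (hΩ : IsOpen Ω) (hB : ∀ q ∈ Ω, curl A q ≠ 0)
    (U : Set (Fin 3 → ℝ)) (hU : IsOpen U)
    (χ : (Fin 3 → ℝ) → (Fin 3 → ℝ)) (hχ : ContDiffOn ℝ (⊤ : ℕ∞) χ U)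
    (hmaps : Set.MapsTo χ U Ω)
    (hinv : ∀ qh ∈ U, Function.Bijective (fderiv ℝ χ qh))
    (hfield : ∀ qh ∈ U,
      fderiv ℝ χ qh (Pi.single 2 1) = (norm3 (curl A (χ qh)))⁻¹ • curl A (χ qh))
    (hsymp : ∀ qh ∈ U, ∀ u v : Fin 3 → ℝ,
      (fderiv ℝ χ qh u) ⬝ᵥ crossProduct (fderiv ℝ χ qh v) (curl A (χ qh)) =
        u 0 * v 1 - u 1 * v 0) :
    ∀ qh ∈ U,
      omega0 (tangentFrame A χ qh 0) (tangentFrame A χ qh 1) = 1 ∧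
      omega0 (tangentFrame A χ qh 0) (tangentFrame A χ qh 2) = 0 ∧
      omega0 (tangentFrame A χ qh 1) (tangentFrame A χ qh 2) = 0 := by
  intro qh hqh
  exact statement7_general (hA.differentiable (by simp) _) (hsymp qh hqh)
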